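/- arXiv:2005.14125 — 2 statements merged into one kernel-verified Lean document; each statement's English description precedes it below -/
import Mathlib

section
/- Let X_1, ..., X_n be compact Hausdorff spaces, X = X_1 × ... × X_n, and let M = {∑_{i=1}^n g_i(x_i) : g_i ∈ C(X_i), i = 1, ..., n}. Then for every f ∈ C(X), the error of best uniform approximation E(f) = inf_{g∈M} ‖f − g‖_{C(X)} satisfies E(f) = sup |∑_{j=1}^m λ_j f(x_j)|, where the supremum is taken over all minimal projection cycles {x_1, ..., x_m} ⊆ X together with associated vectors λ = (λ_1, ..., λ_m) normalized so that ∑_{j=1}^m |λ_j| = 1. -/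
open scoped Classical

/-!
A real combination of point evaluations annihilates all sums `∑ i, g i (x i)` exactly when all its
coordinate projections vanish, so cycles and their associated vectors are the nonzero elements of
a space of finitely supported vectors, and minimal cycles are its elementary vectors. Every element
of such a space is a sum of elementary vectors whose signs agree with its own, hence whose
`ℓ¹`-norms add up; so a bound for `f` on minimal cycles is a bound on all annihilating vectors.
On a finite set of points, Hahn–Banach then gives a sum `∑ i, g i (x i)` whose distance from `f` is
at most the supremum `R` over minimal cycles, without any continuity of `g i`. Continuity is
recovered at the cost of `ε`: the compact space of slices `f (·, …, t, …, ·)` with `t` in `X i`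
carries a partition of unity, and averaging such sums over a finite grid with the product of the
pulled-back weights keeps the error below `R + ε`.
-/

open Finset Finsupp

section ElementaryVectors

variable {α K : Type*} [Field K]

/-- An elementary vector of a subspace `W`: a nonzero vector of `W` whose support is minimal among
the supports of the nonzero vectors of `W`. -/
structure IsElementary (W : Submodule K (α →₀ K)) (c : α →₀ K) : Prop where
  mem : c ∈ W
  ne_zero : c ≠ 0
  support_eq : ∀ d ∈ W, d ≠ 0 → d.support ⊆ c.support → d.support = c.support

lemma IsElementary.smul {W : Submodule K (α →₀ K)} {c : α →₀ K} (hc : IsElementary W c)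
    {t : K} (ht : t ≠ 0) : IsElementary W (t • c) where
  mem := W.smul_mem t hc.mem
  ne_zero := smul_ne_zero ht hc.ne_zero
  support_eq := by simpa only [support_smul_eq ht] using hc.support_eq

variable [LinearOrder K] [IsStrictOrderedRing K]

/-- The `ℓ¹`-norm of a finitely supported vector, kept as a plain function so that it does not
compete with the norms that library instances put on related types. -/
def l1Norm (c : α →₀ K) : K := c.sum fun _ a => |a|

lemma l1Norm_eq_sum_of_subset {c : α →₀ K} {s : Finset α} (h : c.support ⊆ s) :
    l1Norm c = ∑ a ∈ s, |c a| :=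
  c.sum_of_support_subset h _ fun _ _ => abs_zero

lemma l1Norm_pos {c : α →₀ K} (hc : c ≠ 0) : 0 < l1Norm c :=
  sum_pos (fun _ ha => abs_pos.2 (mem_support_iff.1 ha)) (support_nonempty_iff.2 hc)

lemma l1Norm_smul (t : K) (c : α →₀ K) : l1Norm (t • c) = |t| * l1Norm c := by
  rw [l1Norm_eq_sum_of_subset support_smul, l1Norm, Finsupp.sum, Finset.mul_sum]
  simp only [Finsupp.smul_apply, smul_eq_mul, abs_mul]

lemma l1Norm_add_of_forall_mul_nonneg {c d : α →₀ K} (h : ∀ a, 0 ≤ c a * d a) :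
    l1Norm (c + d) = l1Norm c + l1Norm d := by
  rw [l1Norm_eq_sum_of_subset support_add, l1Norm_eq_sum_of_subset subset_union_left,
    l1Norm_eq_sum_of_subset (subset_union_right (s₁ := c.support)), ← sum_add_distrib]
  exact sum_congr rfl fun a _ => abs_add_eq_add_abs_iff _ _ |>.2 (mul_nonneg_iff.1 (h a))

lemma abs_linearCombination_le {f : α → K} {e : K} (hf : ∀ x, |f x| ≤ e) (c : α →₀ K) :
    |linearCombination K f c| ≤ e * l1Norm c :=
  calc |linearCombination K f c| ≤ ∑ x ∈ c.support, |c x * f x| := abs_sum_le_sum_abs _ _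
    _ ≤ ∑ x ∈ c.support, e * |c x| := sum_le_sum fun x _ => by
      rw [abs_mul, mul_comm]
      exact mul_le_mul_of_nonneg_right (hf x) (abs_nonneg _)
    _ = e * l1Norm c := (Finset.mul_sum _ _ _).symm

lemma mul_nonneg_of_mul_nonneg_of_mul_nonneg {a b c : K} (hab : 0 ≤ a * b) (hbc : 0 ≤ b * c)
    (hb : b = 0 → a = 0) : 0 ≤ a * c := by
  rcases eq_or_ne b 0 with h | h
  · simp [hb h]
  · refine nonneg_of_mul_nonneg_right (b := a * c) (a := b * b) ?_ (mul_self_pos.2 h)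
    linarith [mul_nonneg hab hbc, show a * b * (b * c) = b * b * (a * c) by ring]

/-- `t` is the first time at which a coordinate of `c - t • d` vanishes. -/
lemma exists_pos_support_sub_smul_ssubset {c d : α →₀ K} (hdc : d.support ⊆ c.support)
    (hpos : ∃ a, 0 < c a * d a) :
    ∃ t > (0 : K), (c - t • d).support ⊂ c.support ∧ ∀ a, 0 ≤ (c - t • d) a * c a := by
  obtain ⟨a₀, ha₀⟩ := hpos
  obtain ⟨a, ha, hmin⟩ := exists_min_image (c.support.filter fun a => 0 < c a * d a)
    (fun a => c a / d a) ⟨a₀, by simpa [ha₀] using left_ne_zero_of_mul ha₀.ne'⟩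
  simp only [mem_filter, mem_support_iff, and_imp] at ha hmin
  obtain ⟨hca, hcda⟩ := ha
  have hda : d a ≠ 0 := right_ne_zero_of_mul hcda.ne'
  refine ⟨c a / d a, div_pos_iff.2 (mul_pos_iff.1 hcda), ?_, fun b => ?_⟩
  · refine (ssubset_iff_of_subset ?_).2 ⟨a, mem_support_iff.2 hca, by simp [hda]⟩
    exact support_sub.trans (union_subset subset_rfl (support_smul.trans hdc))
  · have hb : (c a / d a) * (c b * d b) ≤ c b * c b := by
      rcases le_or_gt (c b * d b) 0 with hneg | hpos
      · exact (mul_nonpos_of_nonneg_of_nonpos (div_pos_iff.2 (mul_pos_iff.1 hcda)).le hneg).trans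
          (mul_self_nonneg _)
      · have hdb : d b ≠ 0 := right_ne_zero_of_mul hpos.ne'
        calc c a / d a * (c b * d b) ≤ c b / d b * (c b * d b) :=
              mul_le_mul_of_nonneg_right (hmin b (left_ne_zero_of_mul hpos.ne') hpos) hpos.le
          _ = c b * c b := by field_simp
    simp only [Finsupp.sub_apply, Finsupp.smul_apply, smul_eq_mul]
    linarith

lemma exists_isElementary_conformal {W : Submodule K (α →₀ K)} {c : α →₀ K} (hc : c ∈ W)
    (hc0 : c ≠ 0) :
    ∃ d, IsElementary W d ∧ d.support ⊆ c.support ∧ ∀ a, 0 ≤ d a * c a := by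
  induction hs : c.support using Finset.strongInduction generalizing c with | H s ih
  subst hs
  by_cases helem : IsElementary W c
  · exact ⟨c, helem, subset_rfl, fun a => mul_self_nonneg _⟩
  obtain ⟨d, hd, hdc, hpos⟩ : ∃ d ∈ W, d.support ⊂ c.support ∧ ∃ a, 0 < c a * d a := by
    obtain ⟨d, hd, hd0, hsub, hne⟩ : ∃ d ∈ W, d ≠ 0 ∧ d.support ⊆ c.support ∧
        d.support ≠ c.support := by
      by_contra! h
      exact helem ⟨hc, hc0, h⟩
    obtain ⟨a, ha⟩ := support_nonempty_iff.2 hd0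
    have hcd : c a * d a ≠ 0 :=
      mul_ne_zero (mem_support_iff.1 (hsub ha)) (mem_support_iff.1 ha)
    rcases hcd.lt_or_gt with hneg | hpos
    · exact ⟨-d, W.neg_mem hd, by simpa using hsub.ssubset_of_ne hne, a, by simpa using hneg⟩
    · exact ⟨d, hd, hsub.ssubset_of_ne hne, a, hpos⟩
  obtain ⟨t, -, hlt, hconf⟩ := exists_pos_support_sub_smul_ssubset hdc.subset hpos
  have hne : c - t • d ≠ 0 := fun h =>
    hdc.not_subset (sub_eq_zero.1 h ▸ support_smul)
  obtain ⟨e, he, hes, hesign⟩ := ih _ hlt (W.sub_mem hc (W.smul_mem t hd)) hne rfl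
  refine ⟨e, he, hes.trans hlt.subset, fun a =>
    mul_nonneg_of_mul_nonneg_of_mul_nonneg (hesign a) (hconf a) fun h => ?_⟩
  exact notMem_support_iff.1 fun ha => mem_support_iff.1 (hes ha) h

theorem le_mul_l1Norm_of_forall_isElementary {W : Submodule K (α →₀ K)} {φ : (α →₀ K) →ₗ[K] K}
    {R : K} (h : ∀ d, IsElementary W d → φ d ≤ R * l1Norm d) {c : α →₀ K} (hc : c ∈ W) :
    φ c ≤ R * l1Norm c := by
  induction hs : c.support using Finset.strongInduction generalizing c with | H s ih
  subst hs
  rcases eq_or_ne c 0 with rfl | hc0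
  · simp [l1Norm]
  obtain ⟨d, hd, hdc, hsign⟩ := exists_isElementary_conformal hc hc0
  obtain ⟨a, ha⟩ := support_nonempty_iff.2 hd.ne_zero
  have hpos : 0 < c a * d a := (mul_comm (c a) _ ▸ hsign a).lt_of_ne'
    (mul_ne_zero (mem_support_iff.1 (hdc ha)) (mem_support_iff.1 ha))
  obtain ⟨t, ht, hlt, hconf⟩ := exists_pos_support_sub_smul_ssubset hdc ⟨a, hpos⟩
  have hnorm : l1Norm c = t * l1Norm d + l1Norm (c - t • d) := by
    conv_lhs => rw [← add_sub_cancel (t • d) c]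
    rw [l1Norm_add_of_forall_mul_nonneg, l1Norm_smul, abs_of_pos ht]
    intro b
    rw [Finsupp.smul_apply, smul_eq_mul, mul_assoc]
    refine mul_nonneg ht.le (mul_nonneg_of_mul_nonneg_of_mul_nonneg (hsign b)
      (mul_comm (c b) _ ▸ hconf b) fun h => ?_)
    exact notMem_support_iff.1 fun hb => mem_support_iff.1 (hdc hb) h
  calc φ c = t * φ d + φ (c - t • d) := by simp
    _ ≤ t * (R * l1Norm d) + R * l1Norm (c - t • d) := by
      gcongr
      · exact h d hd
      · exact ih _ hlt (W.sub_mem hc (W.smul_mem t hd.mem)) rfl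
    _ = R * l1Norm c := by rw [hnorm]; ring

end ElementaryVectors

section Duality

lemma sum_abs_apply_single_le_norm {κ : Type*} [Fintype κ] [DecidableEq κ]
    (l : StrongDual ℝ (κ → ℝ)) :
    ∑ i, |l (Pi.single i 1)| ≤ ‖l‖ := by
  set σ : κ → ℝ := fun i => SignType.sign (l (Pi.single i 1))
  have hσ : ‖σ‖ ≤ 1 := (pi_norm_le_iff_of_nonneg zero_le_one).2 fun i => by
    rcases lt_trichotomy (l (Pi.single i 1)) 0 with h | h | h <;> simp [σ, h]
  calc ∑ i, |l (Pi.single i 1)| = l σ := by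
        rw [pi_eq_sum_univ' σ, map_sum]
        refine sum_congr rfl fun i _ => ?_
        simp [σ, sign_mul_self]
    _ ≤ ‖l‖ * ‖σ‖ := (le_abs_self _).trans (l.le_opNorm σ)
    _ ≤ ‖l‖ := mul_le_of_le_one_right (norm_nonneg _) hσ

lemma exists_strongDual_eq_infDist {E : Type*} [SeminormedAddCommGroup E] [NormedSpace ℝ E]
    (M : Submodule ℝ E) (v : E) :
    ∃ l : StrongDual ℝ E, ‖l‖ ≤ 1 ∧ (∀ w ∈ M, l w = 0) ∧ l v = Metric.infDist v M := by
  obtain ⟨l, hl, hlv⟩ := exists_dual_vector'' ℝ (M.mkQ v)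
  refine ⟨l.comp M.mkQL, ?_, fun w hw => ?_, ?_⟩
  · refine ContinuousLinearMap.opNorm_le_bound _ zero_le_one fun w => ?_
    exact (l.le_of_opNorm_le hl _).trans (by gcongr; exact QuotientAddGroup.norm_mk_le_norm)
  · rw [ContinuousLinearMap.comp_apply, Submodule.mkQL_apply, Submodule.mkQ_apply,
      (Submodule.Quotient.mk_eq_zero M).2 hw, map_zero]
  · exact hlv.trans (QuotientAddGroup.norm_mk v)

theorem exists_mem_forall_abs_sub_le {α : Type*} (M : Submodule ℝ (α → ℝ)) {f : α → ℝ} {R : ℝ}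
    (hR : 0 ≤ R)
    (h : ∀ c : α →₀ ℝ, (∀ g ∈ M, linearCombination ℝ g c = 0) →
      linearCombination ℝ f c ≤ R * l1Norm c)
    (G : Finset α) : ∃ g ∈ M, ∀ x ∈ G, |f x - g x| ≤ R := by
  let res : (α → ℝ) →ₗ[ℝ] (G → ℝ) := LinearMap.funLeft ℝ ℝ (↑)
  obtain ⟨l, hl, hlM, hlf⟩ := exists_strongDual_eq_infDist (M.map res) (res f)
  let c : G →₀ ℝ := equivFunOnFinite.symm fun p => l (Pi.single p 1)
  have hc : ∀ g : α → ℝ,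
      linearCombination ℝ g (c.embDomain (.subtype (· ∈ G))) = l (res g) := fun g => by
    rw [pi_eq_sum_univ' (res g), map_sum, linearCombination_embDomain,
      linearCombination_apply, sum_fintype _ _ (by simp)]
    exact sum_congr rfl fun p _ => by simp [c, res, LinearMap.funLeft_apply, mul_comm]
  have hnorm : l1Norm (c.embDomain (.subtype (· ∈ G))) ≤ 1 := by
    rw [l1Norm, Finsupp.sum_embDomain, ← l1Norm, l1Norm_eq_sum_of_subset (subset_univ _)]
    exact (sum_abs_apply_single_le_norm l).trans hl
  have hdist : Metric.infDist (res f) (M.map res) ≤ R := by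
    rw [← hlf, ← hc]
    refine (h _ fun g hg => ?_).trans (mul_le_of_le_one_right hR hnorm)
    rw [hc, hlM _ (Submodule.mem_map_of_mem hg)]
  obtain ⟨_, ⟨g, hg, rfl⟩, hgf⟩ :=
    (M.map res).closed_of_finiteDimensional.exists_infDist_eq_dist ⟨0, zero_mem _⟩ (res f)
  exact ⟨g, hg, fun x hx => (dist_pi_le_iff hR).1 (hgf ▸ hdist) ⟨x, hx⟩⟩

end Duality

section ProjectionCycles

variable {ι : Type*} {X : ι → Type*}

/-- The finitely supported vectors on a product whose pushforwards under all coordinate projections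
vanish. Its nonzero elements are the associated vectors of projection cycles, each carried by its
support. -/
noncomputable def projectionKernel (X : ι → Type*) : Submodule ℝ ((∀ i, X i) →₀ ℝ) :=
  ⨅ i, (lmapDomain ℝ ℝ fun x : ∀ i, X i => x i).ker

lemma mem_projectionKernel {c : (∀ i, X i) →₀ ℝ} :
    c ∈ projectionKernel X ↔ ∀ i, c.mapDomain (fun x => x i) = 0 := by
  simp [projectionKernel]

lemma sum_single_mem_projectionKernel {κ : Type*} {s : Finset κ} {x : κ → ∀ i, X i} {μ : κ → ℝ} :
    ∑ j ∈ s, single (x j) (μ j) ∈ projectionKernel X ↔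
      ∀ (i : ι) (t : X i), ∑ j ∈ s.filter (fun j => x j i = t), μ j = 0 := by
  simp only [mem_projectionKernel, mapDomain_finsetSum, mapDomain_single, Finsupp.ext_iff,
    finsetSum_apply, single_apply, sum_filter, Finsupp.coe_zero, Pi.zero_apply]

/-- The values `|∑ⱼ λⱼ f(xⱼ)|` over the minimal projection cycles `{x₁, …, x_m}`, listed without
repetition by `x`, and their associated vectors `λ` with `∑ⱼ |λⱼ| = 1`. -/
def minimalCycleValues (f : (∀ i, X i) → ℝ) : Set ℝ :=
  {v : ℝ | ∃ (m : ℕ) (x : Fin m → ∀ i, X i) (lam : Fin m → ℝ),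
    Function.Injective x ∧ (∀ j, lam j ≠ 0) ∧
    (∀ (i : ι) (t : X i), ∑ j ∈ Finset.univ.filter (fun j => x j i = t), lam j = 0) ∧
    (¬ ∃ (s : Finset (Fin m)) (mu : Fin m → ℝ), s ≠ Finset.univ ∧ s.Nonempty ∧
      (∀ j ∈ s, mu j ≠ 0) ∧
      ∀ (i : ι) (t : X i), ∑ j ∈ s.filter (fun j => x j i = t), mu j = 0) ∧
    (∑ j, |lam j|) = 1 ∧
    v = |∑ j, lam j * f (x j)|}

lemma support_sum_single_of_injective {κ α M : Type*} [AddCommMonoid M] {s : Finset κ} {x : κ → α}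
    (hx : Function.Injective x) {μ : κ → M} (hμ : ∀ j ∈ s, μ j ≠ 0) :
    (∑ j ∈ s, single (x j) (μ j)).support = s.image x := by
  rw [support_sum_eq_biUnion, ← biUnion_singleton]
  · exact biUnion_congr rfl fun j hj => by simp [support_single, hμ j hj]
  · exact fun i j hij => (disjoint_singleton.2 (hx.ne hij)).mono support_single_subset
      support_single_subset

lemma l1Norm_sum_single_of_injective {κ α K : Type*} [Field K] [LinearOrder K]
    {s : Finset κ} {x : κ → α} (hx : Function.Injective x) {μ : κ → K} (hμ : ∀ j ∈ s, μ j ≠ 0) :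
    l1Norm (∑ j ∈ s, single (x j) (μ j)) = ∑ j ∈ s, |μ j| := by
  rw [l1Norm, Finsupp.sum, support_sum_single_of_injective hx hμ, sum_image hx.injOn]
  exact sum_congr rfl fun k hk => by simp [single_apply, hx.eq_iff, hk]

lemma exists_injective_fin_image_eq {α : Type*} (s : Finset α) :
    ∃ (m : ℕ) (x : Fin m → α), Function.Injective x ∧ univ.image x = s := by
  refine ⟨#s, (↑) ∘ s.equivFin.symm, Subtype.val_injective.comp s.equivFin.symm.injective, ?_⟩
  rw [← image_image, image_univ_equiv, ← attach_eq_univ, attach_image_val]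

lemma sum_eq_finsuppSum_of_image_eq {κ α M N : Type*} [Fintype κ] [Zero M] [AddCommMonoid N]
    {c : α →₀ M} {x : κ → α} (hx : Function.Injective x) (himage : univ.image x = c.support)
    (h : α → M → N) : ∑ j, h (x j) (c (x j)) = c.sum h := by
  rw [Finsupp.sum, ← himage, sum_image hx.injOn]

lemma exists_mem_projectionKernel_of_mem_minimalCycleValues {f : (∀ i, X i) → ℝ} {v : ℝ}
    (hv : v ∈ minimalCycleValues f) :
    ∃ c ∈ projectionKernel X, l1Norm c = 1 ∧ |linearCombination ℝ f c| = v := by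
  obtain ⟨m, x, lam, hx, hlam, hcycle, -, hnorm, rfl⟩ := hv
  refine ⟨∑ j, single (x j) (lam j), sum_single_mem_projectionKernel.2 hcycle, ?_, ?_⟩
  · rw [l1Norm_sum_single_of_injective hx fun j _ => hlam j, hnorm]
  · simp only [map_sum, linearCombination_single, smul_eq_mul]

lemma nonneg_of_mem_minimalCycleValues {f : (∀ i, X i) → ℝ} {v : ℝ}
    (hv : v ∈ minimalCycleValues f) : 0 ≤ v := by
  obtain ⟨c, -, -, rfl⟩ := exists_mem_projectionKernel_of_mem_minimalCycleValues hv
  exact abs_nonneg _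

lemma abs_linearCombination_mem_minimalCycleValues {f : (∀ i, X i) → ℝ} {c : (∀ i, X i) →₀ ℝ}
    (hc : IsElementary (projectionKernel X) c) (hc1 : l1Norm c = 1) :
    |linearCombination ℝ f c| ∈ minimalCycleValues f := by
  obtain ⟨m, x, hx, himage⟩ := exists_injective_fin_image_eq c.support
  refine ⟨m, x, fun j => c (x j), hx, fun j => ?_, ?_, ?_, ?_, ?_⟩
  · exact mem_support_iff.1 (himage ▸ mem_image_of_mem x (mem_univ j))
  · refine sum_single_mem_projectionKernel.1 ?_
    rw [sum_eq_finsuppSum_of_image_eq hx himage single, c.sum_single]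
    exact hc.mem
  · rintro ⟨s, μ, hs, hne, hμ, hcycle⟩
    have hsupp := support_sum_single_of_injective hx hμ
    have heq : s.image x = univ.image x := by
      rw [← hsupp, himage]
      refine hc.support_eq _ (sum_single_mem_projectionKernel.2 hcycle) ?_ ?_
      · rw [← support_nonempty_iff, hsupp]
        exact hne.image x
      · rw [hsupp, ← himage]
        exact image_subset_image (subset_univ s)
    exact hs (image_injective hx heq)
  · exact (sum_eq_finsuppSum_of_image_eq hx himage fun _ a => |a|).trans hc1
  · exact congrArg _ (sum_eq_finsuppSum_of_image_eq hx himage fun p a => a * f p).symm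

lemma IsElementary.linearCombination_le {f : (∀ i, X i) → ℝ} {R : ℝ}
    (hR : ∀ v ∈ minimalCycleValues f, v ≤ R) {c : (∀ i, X i) →₀ ℝ}
    (hc : IsElementary (projectionKernel X) c) : linearCombination ℝ f c ≤ R * l1Norm c := by
  have hpos : 0 < l1Norm c := l1Norm_pos hc.ne_zero
  have hle := hR _ (abs_linearCombination_mem_minimalCycleValues (hc.smul (inv_ne_zero hpos.ne'))
    (by rw [l1Norm_smul, abs_of_pos (inv_pos.2 hpos), inv_mul_cancel₀ hpos.ne']))
  rw [map_smul, smul_eq_mul, inv_mul_eq_div, abs_div, abs_of_pos hpos, div_le_iff₀ hpos] at hle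
  exact (le_abs_self _).trans hle

variable [Fintype ι]

/-- The map sending univariate functions `g i` to the function `x ↦ ∑ i, g i (x i)`. -/
def coordinateSum (X : ι → Type*) : (∀ i, X i → ℝ) →ₗ[ℝ] (∀ i, X i) → ℝ where
  toFun g x := ∑ i, g i (x i)
  map_add' _ _ := funext fun _ => sum_add_distrib
  map_smul' _ _ := funext fun _ => (Finset.mul_sum _ _ _).symm

lemma linearCombination_coordinateSum (g : ∀ i, X i → ℝ) (c : (∀ i, X i) →₀ ℝ) :
    linearCombination ℝ (coordinateSum X g) c =
      ∑ i, linearCombination ℝ (g i) (c.mapDomain fun x => x i) := by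
  simp only [linearCombination_mapDomain]
  simp only [linearCombination_apply, Finsupp.sum, coordinateSum, LinearMap.coe_mk, AddHom.coe_mk,
    smul_eq_mul, Finset.mul_sum, Function.comp_apply]
  exact Finset.sum_comm

lemma mem_projectionKernel_iff_linearCombination_coordinateSum {c : (∀ i, X i) →₀ ℝ} :
    c ∈ projectionKernel X ↔ ∀ g, linearCombination ℝ (coordinateSum X g) c = 0 := by
  refine ⟨fun hc g => ?_, fun h => mem_projectionKernel.2 fun i => Finsupp.ext fun t => ?_⟩
  · simp [linearCombination_coordinateSum, mem_projectionKernel.1 hc]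
  · have hit := h (Pi.single i (Pi.single t 1))
    rw [linearCombination_coordinateSum, Finset.sum_eq_single i] at hit
    · simpa [linearCombination_apply, Pi.single_apply] using hit
    · simp +contextual
    · simp

lemma le_of_mem_minimalCycleValues {f : (∀ i, X i) → ℝ} {g : ∀ i, X i → ℝ} {e : ℝ}
    (he : ∀ x, |f x - ∑ i, g i (x i)| ≤ e) {v : ℝ} (hv : v ∈ minimalCycleValues f) : v ≤ e := by
  obtain ⟨c, hc, hnorm, rfl⟩ := exists_mem_projectionKernel_of_mem_minimalCycleValues hv
  have horth := mem_projectionKernel_iff_linearCombination_coordinateSum.1 hc g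
  calc |linearCombination ℝ f c| = |linearCombination ℝ (f - coordinateSum X g) c| := by
        rw [← sub_zero (linearCombination ℝ f c), ← horth]
        simp only [linearCombination_apply, Pi.sub_apply, smul_sub, sum_sub]
    _ ≤ e * l1Norm c := abs_linearCombination_le he c
    _ = e := by rw [hnorm, mul_one]

theorem exists_forall_mem_abs_sub_sum_le {f : (∀ i, X i) → ℝ} {R : ℝ} (hR : 0 ≤ R)
    (h : ∀ v ∈ minimalCycleValues f, v ≤ R) (G : Finset (∀ i, X i)) :
    ∃ g : ∀ i, X i → ℝ, ∀ p ∈ G, |f p - ∑ i, g i (p i)| ≤ R := by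
  obtain ⟨_, ⟨g, rfl⟩, hg⟩ := exists_mem_forall_abs_sub_le (coordinateSum X).range hR
    (fun c hc => le_mul_l1Norm_of_forall_isElementary (fun _ hd => hd.linearCombination_le h)
      (mem_projectionKernel_iff_linearCombination_coordinateSum.2 fun g => hc _ ⟨g, rfl⟩)) G
  exact ⟨g, hg⟩

end ProjectionCycles

section Smoothing

lemma exists_finset_continuous_weights {Y Z : Type*} [TopologicalSpace Y] [CompactSpace Y]
    [MetricSpace Z] {F : Y → Z} (hF : Continuous F) {ε : ℝ} (hε : 0 < ε) :
    ∃ (T : Finset Y) (w : Y → Y → ℝ), (∀ t, Continuous (w t)) ∧ (∀ t y, 0 ≤ w t y) ∧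
      (∀ y, ∑ t ∈ T, w t y = 1) ∧ ∀ t y, w t y ≠ 0 → dist (F t) (F y) < ε := by
  obtain ⟨ρ, hρ⟩ := PartitionOfUnity.exists_isSubordinate (isCompact_range hF).isClosed
    (fun t => Metric.ball (F t) ε) (fun _ => Metric.isOpen_ball)
    (Set.range_subset_iff.2 fun t => Set.mem_iUnion.2 ⟨t, Metric.mem_ball_self hε⟩)
  have hfin := ρ.locallyFinite.finite_nonempty_inter_compact (isCompact_range hF)
  refine ⟨hfin.toFinset, fun t y => ρ t (F y), fun t => (ρ t).continuous.comp hF,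
    fun t y => ρ.nonneg t _, fun y => ?_, fun t y hty => ?_⟩
  · rw [← ρ.sum_eq_one (Set.mem_range_self y)]
    exact (finsum_eq_sum_of_support_subset _ fun t ht =>
      hfin.mem_toFinset.2 ⟨F y, ht, Set.mem_range_self y⟩).symm
  · exact dist_comm (F t) _ ▸ hρ t (subset_tsupport _ hty)

variable {ι : Type*} [Fintype ι] {X : ι → Type*}

lemma sum_piFinset_prod_mul_apply {K : Type*} [CommSemiring K] {T : ∀ i, Finset (X i)}
    {w : ∀ i, X i → K} (hw : ∀ i, ∑ t ∈ T i, w i t = 1) (i : ι) (h : X i → K) :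
    ∑ p ∈ Fintype.piFinset T, (∏ j, w j (p j)) * h (p i) = ∑ t ∈ T i, w i t * h t := by
  let w' := Function.update w i fun t => w i t * h t
  have hw' : ∀ p : ∀ j, X j, (∏ j, w j (p j)) * h (p i) = ∏ j, w' j (p j) := fun p => by
    rw [Fintype.prod_eq_mul_prod_compl i, Fintype.prod_eq_mul_prod_compl i fun j => w' j (p j),
      mul_right_comm]
    congr 1
    · simp [w']
    · refine prod_congr rfl fun j hj => ?_
      have hji : j ≠ i := by simpa using hj
      simp [w', hji]
  simp only [hw']
  rw [← prod_univ_sum, Fintype.prod_eq_single i fun j hj => by simp [w', hj, hw]]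
  simp [w']

/-- Both sides are averaged over the grid `∏ T i` with respect to the product weights. -/
lemma abs_sub_sum_weightedSum_le {T : ∀ i, Finset (X i)} {w : ∀ i, X i → ℝ}
    (hw0 : ∀ i t, 0 ≤ w i t) (hw1 : ∀ i, ∑ t ∈ T i, w i t = 1) {a R : ℝ} {g : ∀ i, X i → ℝ}
    (h : ∀ p ∈ Fintype.piFinset T, (∀ i, w i (p i) ≠ 0) → |a - ∑ i, g i (p i)| ≤ R) :
    |a - ∑ i, ∑ t ∈ T i, w i t * g i t| ≤ R := by
  let W : (∀ i, X i) → ℝ := fun p => ∏ i, w i (p i)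
  have hW0 : ∀ p, 0 ≤ W p := fun p => prod_nonneg fun i _ => hw0 i _
  have hW1 : ∑ p ∈ Fintype.piFinset T, W p = 1 := by
    simp only [W, ← prod_univ_sum, hw1, prod_const_one]
  have havg : a - ∑ i, ∑ t ∈ T i, w i t * g i t =
      ∑ p ∈ Fintype.piFinset T, W p * (a - ∑ i, g i (p i)) := by
    simp only [mul_sub, sum_sub_distrib, ← Finset.sum_mul, hW1, one_mul, Finset.mul_sum]
    rw [Finset.sum_comm]
    simp only [W, sum_piFinset_prod_mul_apply hw1]
  calc |a - ∑ i, ∑ t ∈ T i, w i t * g i t|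
      ≤ ∑ p ∈ Fintype.piFinset T, |W p * (a - ∑ i, g i (p i))| := havg ▸ abs_sum_le_sum_abs _ _
    _ ≤ ∑ p ∈ Fintype.piFinset T, W p * R := sum_le_sum fun p hp => by
      rw [abs_mul, abs_of_nonneg (hW0 p)]
      rcases eq_or_ne (W p) 0 with hWp | hWp
      · simp [hWp]
      · exact mul_le_mul_of_nonneg_left
          (h p hp fun i => prod_ne_zero_iff.1 hWp i (mem_univ i)) (hW0 p)
    _ = R := by rw [← Finset.sum_mul, hW1, one_mul]

variable [∀ i, TopologicalSpace (X i)]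

/-- A continuous function on a product, regarded as a function of its `i`-th coordinate with values
in functions of the remaining coordinates. The latter are encoded as functions on the whole
product that ignore the `i`-th coordinate. -/
noncomputable def coordinateSlice {E : Type*} [TopologicalSpace E] (f : C(∀ i, X i, E)) (i : ι) :
    C(X i, C(∀ i, X i, E)) :=
  ContinuousMap.curry ⟨fun q => f (Function.update q.2 i q.1), by fun_prop⟩

variable [∀ i, CompactSpace (X i)]

lemma dist_apply_le_sum_dist_coordinateSlice {E : Type*} [PseudoMetricSpace E]
    (f : C(∀ i, X i, E)) (p x : ∀ i, X i) :
    dist (f p) (f x) ≤ ∑ i, dist (coordinateSlice f i (p i)) (coordinateSlice f i (x i)) := by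
  suffices h : ∀ s : Finset ι, dist (f (s.piecewise p x)) (f x) ≤
      ∑ i ∈ s, dist (coordinateSlice f i (p i)) (coordinateSlice f i (x i)) by simpa using h univ
  intro s
  induction s using Finset.induction_on with
  | empty => simp
  | insert j s hj ih =>
    set y := s.piecewise p x
    have hp : f ((insert j s).piecewise p x) = coordinateSlice f j (p j) y :=
      congrArg f (piecewise_insert s p x j)
    have hx : f y = coordinateSlice f j (x j) y := by
      rw [← s.piecewise_eq_of_notMem p x hj]
      exact congrArg f (Function.update_eq_self j y).symm
    calc dist (f ((insert j s).piecewise p x)) (f x)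
        ≤ dist (f ((insert j s).piecewise p x)) (f y) + dist (f y) (f x) := dist_triangle _ _ _
      _ ≤ _ := by
        rw [sum_insert hj, hp]
        exact add_le_add (hx ▸ ContinuousMap.dist_apply_le_dist y) ih

theorem exists_continuous_abs_sub_sum_le (f : C(∀ i, X i, ℝ)) {R ε : ℝ} (hε : 0 < ε)
    (h : ∀ G : Finset (∀ i, X i), ∃ g : ∀ i, X i → ℝ, ∀ p ∈ G, |f p - ∑ i, g i (p i)| ≤ R) :
    ∃ g : ∀ i, X i → ℝ, (∀ i, Continuous (g i)) ∧ ∀ x, |f x - ∑ i, g i (x i)| ≤ R + ε := by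
  obtain ⟨δ, hδ, hδε⟩ := exists_pos_mul_lt hε (Fintype.card ι : ℝ)
  choose T w hcont hw0 hw1 hclose using fun i =>
    exists_finset_continuous_weights (coordinateSlice f i).continuous hδ
  obtain ⟨g, hg⟩ := h (Fintype.piFinset T)
  refine ⟨fun i y => ∑ t ∈ T i, w i t y * g i t, fun i => by fun_prop, fun x => ?_⟩
  refine abs_sub_sum_weightedSum_le (fun i t => hw0 i t (x i)) (fun i => hw1 i (x i))
    fun p hp hpx => ?_
  have hpf : dist (f p) (f x) ≤ ε :=
    calc dist (f p) (f x)
        ≤ ∑ i, dist (coordinateSlice f i (p i)) (coordinateSlice f i (x i)) :=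
          dist_apply_le_sum_dist_coordinateSlice f p x
      _ ≤ ∑ _i : ι, δ := sum_le_sum fun i _ => (hclose i _ _ (hpx i)).le
      _ ≤ ε := by simpa using hδε.le
  calc |f x - ∑ i, g i (p i)| ≤ |f x - f p| + |f p - ∑ i, g i (p i)| := abs_sub_le _ _ _
    _ ≤ ε + R := add_le_add (by rwa [abs_sub_comm]) (hg p hp)
    _ = R + ε := add_comm ε R

end Smoothing

section BestApproximation

variable {ι : Type*} [Fintype ι] {X : ι → Type*} [∀ i, TopologicalSpace (X i)]

/-- The uniform errors `‖f - ∑ i, g i (x i)‖` of the approximations of `f` by sums of continuous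
univariate functions `g i`. -/
def additiveErrors (f : (∀ i, X i) → ℝ) : Set ℝ :=
  {e : ℝ | ∃ g : ∀ i, X i → ℝ, (∀ i, Continuous (g i)) ∧
    e = sSup (Set.range (fun x : ∀ i, X i => |f x - ∑ i, g i (x i)|))}

lemma additiveErrors_nonempty (f : (∀ i, X i) → ℝ) : (additiveErrors f).Nonempty :=
  ⟨_, 0, fun _ => continuous_const, rfl⟩

lemma nonneg_of_mem_additiveErrors {f : (∀ i, X i) → ℝ} {e : ℝ} (he : e ∈ additiveErrors f) :
    0 ≤ e := by
  obtain ⟨g, -, rfl⟩ := he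
  exact Real.sSup_nonneg (Set.forall_mem_range.2 fun x => abs_nonneg _)

lemma sInf_additiveErrors_le {f : (∀ i, X i) → ℝ} {g : ∀ i, X i → ℝ}
    (hg : ∀ i, Continuous (g i)) {e : ℝ} (he : 0 ≤ e) (h : ∀ x, |f x - ∑ i, g i (x i)| ≤ e) :
    sInf (additiveErrors f) ≤ e :=
  (csInf_le ⟨0, fun _ => nonneg_of_mem_additiveErrors⟩ ⟨g, hg, rfl⟩).trans
    (Real.sSup_le (Set.forall_mem_range.2 h) he)

lemma le_of_mem_minimalCycleValues_of_mem_additiveErrors [∀ i, CompactSpace (X i)]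
    {f : (∀ i, X i) → ℝ} (hf : Continuous f) {v e : ℝ} (hv : v ∈ minimalCycleValues f)
    (he : e ∈ additiveErrors f) : v ≤ e := by
  obtain ⟨g, hg, rfl⟩ := he
  have hcont : Continuous fun x : ∀ i, X i => |f x - ∑ i, g i (x i)| := by fun_prop
  exact le_of_mem_minimalCycleValues
    (fun x => le_csSup (isCompact_range hcont).bddAbove (Set.mem_range_self x)) hv

theorem stmt16_general [∀ i, CompactSpace (X i)] {f : (∀ i, X i) → ℝ} (hf : Continuous f) :
    sInf (additiveErrors f) = sSup (minimalCycleValues f) := by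
  have hle {v e : ℝ} : v ∈ minimalCycleValues f → e ∈ additiveErrors f → v ≤ e :=
    le_of_mem_minimalCycleValues_of_mem_additiveErrors hf
  obtain ⟨e₀, he₀⟩ := additiveErrors_nonempty f
  have hbdd : BddAbove (minimalCycleValues f) := ⟨e₀, fun v hv => hle hv he₀⟩
  have hnonneg : 0 ≤ sSup (minimalCycleValues f) :=
    Real.sSup_nonneg fun v hv => nonneg_of_mem_minimalCycleValues hv
  refine le_antisymm (le_of_forall_pos_le_add fun ε hε => ?_) (le_csInf ⟨e₀, he₀⟩ fun e he =>
    Real.sSup_le (fun v hv => hle hv he) (nonneg_of_mem_additiveErrors he))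
  obtain ⟨g, hg, hfg⟩ := exists_continuous_abs_sub_sum_le ⟨f, hf⟩ hε
    (exists_forall_mem_abs_sub_sum_le hnonneg fun v hv => le_csSup hbdd hv)
  exact sInf_additiveErrors_le hg (add_nonneg hnonneg hε.le) hfg

end BestApproximation

/-- Golomb's formula (in its corrected, stronger form): for compact Hausdorff
spaces `X₁,...,X_n` and `X = X₁ × ⋯ × X_n`, the error of best uniform
approximation of `f ∈ C(X)` by sums `∑ᵢ gᵢ(xᵢ)`, `gᵢ ∈ C(Xᵢ)`, equals the
supremum of `|∑ⱼ λⱼ f(xⱼ)|` over all minimal projection cycles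
`{x₁,...,x_m} ⊆ X` with associated vectors normalized by `∑ⱼ |λⱼ| = 1`. -/
theorem stmt16 {n : ℕ} (X : Fin n → Type*) [∀ i, TopologicalSpace (X i)]
    [∀ i, CompactSpace (X i)] [∀ i, T2Space (X i)]
    (f : (∀ i, X i) → ℝ) (hf : Continuous f) :
    sInf {e : ℝ | ∃ g : ∀ i, X i → ℝ, (∀ i, Continuous (g i)) ∧
        e = sSup (Set.range (fun x : ∀ i, X i => |f x - ∑ i, g i (x i)|))} =
    sSup {v : ℝ | ∃ (m : ℕ) (x : Fin m → ∀ i, X i) (lam : Fin m → ℝ),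
        Function.Injective x ∧ (∀ j, lam j ≠ 0) ∧
        (∀ (i : Fin n) (t : X i),
          ∑ j ∈ Finset.univ.filter (fun j => x j i = t), lam j = 0) ∧
        (¬ ∃ (s : Finset (Fin m)) (mu : Fin m → ℝ), s ≠ Finset.univ ∧ s.Nonempty ∧
          (∀ j ∈ s, mu j ≠ 0) ∧
          ∀ (i : Fin n) (t : X i),
            ∑ j ∈ s.filter (fun j => x j i = t), mu j = 0) ∧
        (∑ j, |lam j|) = 1 ∧
        v = |∑ j, lam j * f (x j)|} :=
  stmt16_general hf
end

section
/- For any positive real numbers α and λ there exists a function σ : ℝ → ℝ which is infinitely differentiable on ℝ, sigmoidal, strictly increasing on (−∞, α), λ-strictly increasing on [α, +∞), and has the following property: for every continuous function f on [0,1]^d and every ε > 0 there exist real numbers d_p, c_{pq}, θ_{pq}, γ_p and vectors w^{pq} ∈ ℝ^d (p = 1, ..., 2d+2, q = 1, ..., d) such that |f(x) − ∑_{p=1}^{2d+2} d_p σ(∑_{q=1}^d c_{pq} σ(w^{pq}·x − θ_{pq}) − γ_p)| < ε for all x ∈ [0,1]^d. -/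
/-!
The tail of `σ` on `[α, ∞)` is the constant `1` plus copies of a dense sequence of polynomials,
cut off to disjoint windows and scaled to amplitudes tending to `0`. Undoing the scaling, affine
images of translates of `σ` are dense in `C[0, 1]`, so it suffices to approximate `f` by
superpositions `∑ p, g p (∑ q, h p q (x q))`.

Let `N > 2d` and let `r` be the current residual. Take `N` grids of small mesh, the `p`-th shifted
by `p / N` of a mesh, and inner functions that are constant on all but `1 / N` of each interval of
their grid. A coordinate of `x` is in the exceptional zone of at most one grid, so `x` lies in a
genuine cell for all but at most `d` values of `p`. After a generic perturbation the inner sums take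
distinct values on distinct cells, hence some `g p` with `|g p| ≤ ‖r‖` nearly equals `r` on the
cells of grid `p`. The average of the `N` terms misses `r` by at most `(2d / N) ‖r‖` up to a small
error. As the inner functions may be chosen arbitrarily close to the previous ones, the outer
functions add up over the iterations with a fixed number `N` of terms, and the error contracts.

With `N = 2d + 1`, the remaining unit of the second layer produces the additive constant.
-/

open Filter Function Set Topology

section Approximation

theorem mem_closure_of_forall_exists_dist_le {X : Type*} [PseudoMetricSpace X] {S : Set X}
    (hS : S.Nonempty) {x : X} {c : ℝ} (hc₀ : 0 < c) (hc₁ : c < 1)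
    (h : ∀ y ∈ S, ∃ y' ∈ S, dist x y' ≤ c * dist x y) : x ∈ closure S := by
  by_contra hx
  have hpos : 0 < Metric.infDist x S := (Metric.infDist_pos_iff_notMem_closure hS).1 hx
  obtain ⟨y, hyS, hy⟩ := (Metric.infDist_lt_iff hS).1
    ((lt_div_iff₀ hc₀).2 (mul_lt_of_lt_one_right hpos hc₁))
  obtain ⟨y', hy'S, hy'⟩ := h y hyS
  rw [lt_div_iff₀' hc₀] at hy
  exact ((Metric.infDist_le_dist_of_mem hy'S).trans hy').not_gt hy

theorem eventually_forall_dist_le_of_uniformContinuous {X Y : Type*} [PseudoMetricSpace X]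
    [PseudoMetricSpace Y] {f : X → Y} (hf : UniformContinuous f) {ε : ℝ} (hε : 0 < ε) :
    ∀ᶠ m : ℝ in atTop, ∀ x y, dist x y ≤ m⁻¹ → dist (f x) (f y) ≤ ε := by
  obtain ⟨δ, hδ, h⟩ := Metric.uniformContinuous_iff.1 hf ε hε
  filter_upwards [tendsto_inv_atTop_zero.eventually_lt_const hδ] with m hm x y hxy
  exact (h (hxy.trans_lt hm)).le

theorem exists_continuousMap_forall_mem_eq_of_finite {κ X : Type*} [TopologicalSpace X]
    [T4Space X] {K : Set κ} (hK : K.Finite) {W : κ → X} (hW : InjOn W K) {t : Set ℝ}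
    [OrdConnected t] (ht : t.Nonempty) {y : κ → ℝ} (hy : ∀ k ∈ K, y k ∈ t) :
    ∃ g : C(X, ℝ), (∀ x, g x ∈ t) ∧ ∀ k ∈ K, g (W k) = y k := by
  let _ : TopologicalSpace K := ⊥
  have : DiscreteTopology K := ⟨rfl⟩
  have : Finite K := hK
  have hemb : IsClosedEmbedding (K.domRestrict W) :=
    continuous_of_discreteTopology.isClosedEmbedding hW.injective
  obtain ⟨g, hgt, hg⟩ := ContinuousMap.exists_extension_forall_mem_of_isClosedEmbedding
    ⟨K.domRestrict y, continuous_of_discreteTopology⟩ (fun k => hy k k.2) ht hemb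
  exact ⟨g, hgt, fun k hk => congrFun hg ⟨k, hk⟩⟩

theorem dense_setOf_injective_add_dual_apply {κ E : Type*} [Countable κ] [AddCommGroup E]
    [Module ℝ E] [TopologicalSpace E] [ContinuousAdd E] [ContinuousSMul ℝ E] [BaireSpace E]
    (A : κ → ℝ) {z : κ → E →L[ℝ] ℝ} (hz : Injective z) :
    Dense {r : E | Injective fun k => A k + z k r} := by
  have hset : {r : E | Injective fun k => A k + z k r} =
      ⋂ kk : {kk : κ × κ // kk.1 ≠ kk.2}, (z kk.1.1 - z kk.1.2) ⁻¹' {A kk.1.2 - A kk.1.1}ᶜ := by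
    ext r
    simp only [Injective, mem_ofPred_eq, mem_iInter, Subtype.forall, Prod.forall, mem_preimage,
      mem_compl_iff, mem_singleton_iff, sub_apply]
    refine forall₂_congr fun k k' => not_imp_not.symm.trans (imp_congr_right fun _ => not_congr ?_)
    constructor <;> intro h <;> linarith
  rw [hset]
  refine dense_iInter_of_isOpen (fun _ => isOpen_compl_singleton.preimage (map_continuous _))
    fun ⟨⟨k, k'⟩, hkk'⟩ => ?_
  exact (dense_compl_singleton _).preimage
    ((z k - z k').isOpenMap_of_ne_zero (sub_ne_zero.2 (hz.ne hkk')))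

end Approximation

section Cells

/-- A regularised floor function: it equals `k` on most of `[k, k + 1)` and climbs to `k + 1` with
slope `a` at the end of that interval, so that it is continuous once `1 ≤ a`. -/
noncomputable def staircase (a u : ℝ) : ℝ := ⌊u⌋ + max 0 (1 - a * (1 - Int.fract u))

theorem continuous_staircase {a : ℝ} (ha : 1 ≤ a) : Continuous (staircase a) := by
  have hper : Continuous fun u : ℝ => max 0 (1 - a * (1 - Int.fract u)) - Int.fract u :=
    ContinuousOn.comp_fract'' (f := fun v => max 0 (1 - a * (1 - v)) - v) (by fun_prop)
      (by simp [ha])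
  refine (continuous_id.add hper).congr fun u => ?_
  rw [staircase, Pi.add_apply, id_eq]
  linarith [Int.floor_add_fract u]

theorem abs_staircase_sub_le {a : ℝ} (ha : 0 ≤ a) (u : ℝ) : |staircase a u - u| ≤ 1 := by
  have hfract : 0 ≤ a * (1 - Int.fract u) := mul_nonneg ha (by linarith [Int.fract_lt_one u])
  have hmax : max 0 (1 - a * (1 - Int.fract u)) ≤ 1 := max_le zero_le_one (by linarith)
  have hmax₀ := le_max_left 0 (1 - a * (1 - Int.fract u))
  rw [staircase, abs_le]
  constructor <;>
    linarith [Int.floor_add_fract u, Int.fract_nonneg u, Int.fract_lt_one u]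

theorem staircase_eq_floor {a u : ℝ} (h : 1 ≤ a * (1 - Int.fract u)) : staircase a u = ⌊u⌋ := by
  rw [staircase, max_eq_left (by linarith), add_zero]

theorem subsingleton_setOf_mul_one_sub_fract_lt_one (N : ℕ) (u : ℝ) :
    {p : Fin N | N * (1 - Int.fract (u + p / N)) < 1}.Subsingleton := by
  intro p hp p' hp'
  have hN : (0 : ℝ) < N := by exact_mod_cast p.pos
  set n : ℤ := ⌊u + p / N⌋ - ⌊u + p' / N⌋ with hn
  have hdiff : ((p - p' - N * n : ℤ) : ℝ) =
      N * (1 - Int.fract (u + p' / N)) - N * (1 - Int.fract (u + p / N)) := by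
    simp only [Int.fract, hn]
    push_cast
    field_simp
    ring
  have hpos : ∀ v : ℝ, 0 < N * (1 - Int.fract v) := fun v =>
    mul_pos hN (sub_pos.2 (Int.fract_lt_one v))
  have hlt : |(p - p' - N * n : ℤ)| < 1 := by
    rw [← Int.cast_lt (R := ℝ), Int.cast_abs, hdiff, abs_lt, Int.cast_one]
    simp only [mem_ofPred_eq] at hp hp'
    constructor <;> linarith [hpos (u + p / N), hpos (u + p' / N)]
  have hmod : (p : ℤ) = p' + N * n := by linarith [Int.abs_lt_one_iff.1 hlt]
  have hmodEq : (p : ℕ) ≡ p' [MOD N] := by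
    rw [← Int.natCast_modEq_iff, hmod]
    simp [Int.ModEq]
  exact Fin.ext (hmodEq.eq_of_lt_of_lt p.2 p'.2)

theorem card_filter_exists_mul_one_sub_fract_lt_one_le {ι : Type*} [Fintype ι] (N : ℕ)
    (u : ι → ℝ) :
    (Finset.univ.filter fun p : Fin N => ∃ i, N * (1 - Int.fract (u i + p / N)) < 1).card ≤
      Fintype.card ι := by
  refine Finset.card_le_card_of_forall_subsingleton
    (fun (p : Fin N) i => N * (1 - Int.fract (u i + p / N)) < 1) (fun p hp => ?_) fun i _ => ?_
  · simpa using hp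
  · exact (subsingleton_setOf_mul_one_sub_fract_lt_one N (u i)).anti fun p hp => hp.2

/-- The sample point in `[0, 1]` of the cell with (real) label `u` for the grid `t ↦ m * t + s`;
clamping to `[0, 1]` handles the cells that stick out at the two ends. -/
noncomputable def cellPoint (m s u : ℝ) : unitInterval := projIcc 0 1 zero_le_one ((u - s) / m)

theorem continuous_cellPoint (m s : ℝ) : Continuous (cellPoint m s) := by
  unfold cellPoint
  fun_prop

theorem dist_cellPoint_le {m s u : ℝ} (hm : 0 < m) {t : unitInterval} (h : |u - (m * t + s)| ≤ 1) :
    dist (cellPoint m s u) t ≤ m⁻¹ := by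
  have hproj : t = projIcc (0 : ℝ) 1 zero_le_one t := (projIcc_val _ t).symm
  have hscale : u - (m * t + s) = ((u - s) / m - t) * m := by field_simp; ring
  rw [hscale, abs_mul, abs_of_pos hm, ← le_div_iff₀ hm, one_div] at h
  rw [Subtype.dist_eq, Real.dist_eq, hproj]
  exact (abs_projIcc_sub_projIcc _).trans h

end Cells

section Superposition

variable {ι P X : Type*} [Fintype ι] [Fintype P] [TopologicalSpace X]

/-- The Kolmogorov superposition `x ↦ ∑ p, g p (∑ q, h p q (x q))` of outer functions `g` and inner
functions `h`. -/
noncomputable def superposition (g : P → C(ℝ, ℝ)) (h : P → ι → C(X, ℝ)) : C(ι → X, ℝ) :=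
  ∑ p, (g p).comp (∑ q, (h p q).comp (ContinuousMap.eval q))

theorem superposition_apply (g : P → C(ℝ, ℝ)) (h : P → ι → C(X, ℝ)) (x : ι → X) :
    superposition g h x = ∑ p, g p (∑ q, h p q (x q)) := by
  simp [superposition]

theorem continuous_superposition (g : P → C(ℝ, ℝ)) :
    Continuous (superposition (ι := ι) (X := X) g) := by
  unfold superposition
  fun_prop

theorem superposition_add (g g' : P → C(ℝ, ℝ)) (h : P → ι → C(X, ℝ)) :
    superposition (g + g') h = superposition g h + superposition g' h := by
  ext x
  simp [superposition_apply, Finset.sum_add_distrib]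

theorem exists_inner_dist_le_eq_on_cells (h₀ : ι → C(unitInterval, ℝ)) {a m s δ : ℝ} (ha : 1 ≤ a)
    (hm : 0 < m) (hδ : 0 < δ)
    (hh : ∀ q t t', dist t t' ≤ m⁻¹ → dist (h₀ q t) (h₀ q t') ≤ δ) :
    ∃ (h : ι → C(unitInterval, ℝ)) (W : (ι → ℤ) → ℝ),
      (∀ q, dist (h q) (h₀ q) ≤ 2 * δ) ∧ Injective W ∧
        ∀ x : ι → unitInterval, (∀ q, 1 ≤ a * (1 - Int.fract (m * x q + s))) →
          ∑ q, h q (x q) = W fun q => ⌊m * x q + s⌋ := by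
  let level : C(unitInterval, ℝ) :=
    ⟨fun t => staircase a (m * t + s), (continuous_staircase ha).comp (by fun_prop)⟩
  have hlevel : ∀ t : unitInterval, |level t - (m * t + s)| ≤ 1 := fun t =>
    abs_staircase_sub_le (by linarith) _
  let z : (ι → ℤ) → (ι → ℝ) →L[ℝ] ℝ := fun k => ∑ q, (k q : ℝ) • ContinuousLinearMap.proj q
  have hz : Injective z := fun k k' h => by
    classical
    funext q
    simpa [z, Pi.single_apply] using congrArg (fun φ => φ (Pi.single q 1)) h
  -- A small generic multiple of `level` makes the sums over distinct cells distinct.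
  obtain ⟨r, hr, hinj⟩ := Metric.dense_iff.1 (dense_setOf_injective_add_dual_apply
    (fun k : ι → ℤ => ∑ q, h₀ q (cellPoint m s (k q))) hz) 0 (δ / (‖level‖ + 1)) (by positivity)
  rw [mem_ball_zero_iff, lt_div_iff₀ (by positivity)] at hr
  let h : ι → C(unitInterval, ℝ) := fun q =>
    (h₀ q).comp (.comp ⟨cellPoint m s, continuous_cellPoint m s⟩ level) + r q • level
  refine ⟨h, _, fun q => ?_, hinj, fun x hx => ?_⟩
  · refine (ContinuousMap.dist_le (by positivity)).2 fun t => ?_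
    have hpert : ‖r q • level t‖ ≤ δ := by
      rw [norm_smul]
      refine (mul_le_mul (norm_le_pi_norm r q) (level.norm_coe_le_norm t) (norm_nonneg _)
        (norm_nonneg _)).trans ?_
      linarith [norm_nonneg r]
    have hcell := hh q _ _ (dist_cellPoint_le hm (hlevel t))
    rw [two_mul, ← add_zero (h₀ q t)]
    exact (dist_add_add_le _ _ _ _).trans (add_le_add hcell (by rwa [dist_zero_right]))
  · have hfloor : ∀ q, level (x q) = ⌊m * x q + s⌋ := fun q => staircase_eq_floor (hx q)
    simp [h, z, hfloor, Finset.sum_add_distrib, mul_comm]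

theorem exists_inner_outer_approx_on_cells (f : C(ι → unitInterval, ℝ))
    (h₀ : ι → C(unitInterval, ℝ)) {a m s η δ : ℝ} (ha : 1 ≤ a) (hm : 0 < m) (hδ : 0 < δ)
    (hf : ∀ x y, dist x y ≤ m⁻¹ → dist (f x) (f y) ≤ η)
    (hh : ∀ q t t', dist t t' ≤ m⁻¹ → dist (h₀ q t) (h₀ q t') ≤ δ) :
    ∃ (h : ι → C(unitInterval, ℝ)) (g : C(ℝ, ℝ)),
      (∀ q, dist (h q) (h₀ q) ≤ 2 * δ) ∧ (∀ y, |g y| ≤ ‖f‖) ∧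
        ∀ x : ι → unitInterval, (∀ q, 1 ≤ a * (1 - Int.fract (m * x q + s))) →
          |f x - g (∑ q, h q (x q))| ≤ η := by
  classical
  obtain ⟨h, W, hdist, hW, hsum⟩ := exists_inner_dist_le_eq_on_cells h₀ (s := s) ha hm hδ hh
  let K : Set (ι → ℤ) := Icc (fun _ => ⌊s⌋) fun _ => ⌊m + s⌋
  let y : (ι → ℤ) → ℝ := fun k => f fun q => cellPoint m s (k q)
  obtain ⟨g, hgf, hg⟩ := exists_continuousMap_forall_mem_eq_of_finite (finite_Icc _ _ : K.Finite)
    hW.injOn (t := Icc (-‖f‖) ‖f‖) (y := y) ⟨0, by simp⟩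
    fun k _ => abs_le.1 (f.norm_coe_le_norm _)
  refine ⟨h, g, hdist, fun t => abs_le.2 (hgf t), fun x hx => ?_⟩
  have hK : (fun q => ⌊m * x q + s⌋) ∈ K :=
    ⟨fun q => Int.floor_le_floor (by nlinarith [(x q).2.1]),
      fun q => Int.floor_le_floor (by nlinarith [(x q).2.2])⟩
  rw [hsum x hx, hg _ hK, ← Real.dist_eq]
  refine hf _ _ ((dist_pi_le_iff (inv_nonneg.2 hm.le)).2 fun q => ?_)
  rw [dist_comm]
  exact dist_cellPoint_le hm (abs_le.2 ⟨by linarith [Int.lt_floor_add_one (m * x q + s)],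
    by linarith [Int.floor_le (m * x q + s)]⟩)

theorem abs_sum_le_of_card_filter_le {p : P → Prop} [DecidablePred p] {e : P → ℝ} {η B : ℝ} {n : ℕ}
    (hη : 0 ≤ η) (hB : 0 ≤ B) (hgood : ∀ i, ¬ p i → |e i| ≤ η) (hbad : ∀ i, p i → |e i| ≤ B)
    (hcard : (Finset.univ.filter p).card ≤ n) : |∑ i, e i| ≤ Fintype.card P * η + n * B := by
  have hterm : ∀ i, |e i| ≤ η + if p i then B else 0 := fun i => by
    split_ifs with hi
    · linarith [hbad i hi]
    · linarith [hgood i hi]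
  calc |∑ i, e i| ≤ ∑ i, (η + if p i then B else 0) :=
        (Finset.abs_sum_le_sum_abs _ _).trans (Finset.sum_le_sum fun i _ => hterm i)
    _ = Fintype.card P * η + (Finset.univ.filter p).card * B := by
        simp [Finset.sum_add_distrib, ← Finset.sum_filter]
    _ ≤ Fintype.card P * η + n * B := by gcongr

theorem exists_superposition_norm_sub_le {N : ℕ} (hN : 0 < N) (f : C(ι → unitInterval, ℝ))
    (h₀ : Fin N → ι → C(unitInterval, ℝ)) {η δ : ℝ} (hη : 0 < η) (hδ : 0 < δ) :
    ∃ g h, dist h h₀ < δ ∧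
      ‖f - superposition g h‖ ≤ η + 2 * Fintype.card ι / N * ‖f‖ := by
  have hN₁ : (1 : ℝ) ≤ N := by exact_mod_cast hN
  have hf := eventually_forall_dist_le_of_uniformContinuous
    (CompactSpace.uniformContinuous_of_continuous f.continuous) hη
  have hh₀ : ∀ᶠ m : ℝ in atTop, ∀ p q t t', dist t t' ≤ m⁻¹ →
      dist (h₀ p q t) (h₀ p q t') ≤ δ / 3 := by
    simp only [eventually_all]
    exact fun p q => eventually_forall_dist_le_of_uniformContinuous
      (CompactSpace.uniformContinuous_of_continuous (h₀ p q).continuous) (by positivity)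
  obtain ⟨m, hmf, hmh, hm⟩ := (hf.and (hh₀.and (eventually_gt_atTop 0))).exists
  choose h g hdist hgf hgood using fun p : Fin N => exists_inner_outer_approx_on_cells f (h₀ p)
    (s := p / N) hN₁ hm (by positivity) hmf (hmh p)
  refine ⟨fun p => (N : ℝ)⁻¹ • g p, h, ?_, ?_⟩
  · refine lt_of_le_of_lt ?_ (show 2 * (δ / 3) < δ by linarith)
    exact (dist_pi_le_iff (by positivity)).2 fun p => (dist_pi_le_iff (by positivity)).2 (hdist p)
  · refine (ContinuousMap.norm_le _ (by positivity)).2 fun x => ?_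
    have hsum : (f - superposition (fun p => (N : ℝ)⁻¹ • g p) h) x =
        (N : ℝ)⁻¹ * ∑ p, (f x - g p (∑ q, h p q (x q))) := by
      simp [superposition_apply, ← Finset.mul_sum, mul_sub, (by positivity : (N : ℝ) ≠ 0)]
    have hbad : ∀ p, |f x - g p (∑ q, h p q (x q))| ≤ 2 * ‖f‖ := fun p => by
      linarith [abs_sub (f x) (g p (∑ q, h p q (x q))), hgf p (∑ q, h p q (x q)),
        f.norm_coe_le_norm x, Real.norm_eq_abs (f x)]
    have htotal := abs_sum_le_of_card_filter_le hη.le (by positivity)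
      (fun p hp => hgood p x (by simpa using hp)) (fun p _ => hbad p)
      (card_filter_exists_mul_one_sub_fract_lt_one_le N fun q => m * x q)
    rw [hsum, norm_mul, norm_inv, Real.norm_natCast, inv_mul_le_iff₀ (by positivity)]
    refine htotal.trans_eq ?_
    rw [Fintype.card_fin]
    field_simp

theorem denseRange_superposition {N : ℕ} (hN : 2 * Fintype.card ι < N) :
    DenseRange fun gh : (Fin N → C(ℝ, ℝ)) × (Fin N → ι → C(unitInterval, ℝ)) =>
      superposition gh.1 gh.2 := by
  intro f
  have hNpos : (0 : ℝ) < N := by exact_mod_cast hN.pos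
  have hcN : (2 * Fintype.card ι : ℝ) / N < 1 := (div_lt_one hNpos).2 (by exact_mod_cast hN)
  obtain ⟨c, hc, hc₁⟩ := exists_between hcN
  have hc₀ : 0 < c := lt_of_le_of_lt (by positivity) hc
  refine mem_closure_of_forall_exists_dist_le (range_nonempty _) hc₀ hc₁ ?_
  rintro _ ⟨⟨g, h⟩, rfl⟩
  set r := f - superposition g h with hr
  rw [dist_eq_norm, ← hr]
  obtain hr₀ | hr₀ := eq_or_ne r 0
  · exact ⟨_, ⟨(g, h), rfl⟩, by rw [dist_eq_norm, ← hr, hr₀]; simp⟩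
  have hη : 0 < (c - 2 * Fintype.card ι / N) * ‖r‖ / 2 := by
    have := sub_pos.2 hc
    positivity
  obtain ⟨δ, hδ, hcont⟩ := Metric.continuous_iff.1 (continuous_superposition g) h _ hη
  obtain ⟨g', h', hh', hg'⟩ := exists_superposition_norm_sub_le hN.pos r h hη hδ
  refine ⟨_, ⟨(g + g', h'), rfl⟩, ?_⟩
  have hsplit : f - superposition (g + g') h' =
      (r - superposition g' h') + (superposition g h - superposition g h') := by
    rw [superposition_add, hr]
    abel
  have hmove : ‖superposition g h - superposition g h'‖ <
      (c - 2 * Fintype.card ι / N) * ‖r‖ / 2 := by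
    rw [← dist_eq_norm, dist_comm]
    exact hcont h' hh'
  rw [dist_eq_norm, hsplit]
  linarith [norm_add_le (r - superposition g' h') (superposition g h - superposition g h')]

theorem exists_superposition_of_dense {N : ℕ} (hN : 2 * Fintype.card ι < N)
    {D : Set C(unitInterval, ℝ)} (hD : Dense D) (f : C(ι → unitInterval, ℝ)) {ε : ℝ} (hε : 0 < ε) :
    ∃ (g : Fin N → C(ℝ, ℝ)) (h : Fin N → ι → C(unitInterval, ℝ)),
      (∀ p q, h p q ∈ D) ∧ ‖f - superposition g h‖ < ε := by
  obtain ⟨⟨g, h₀⟩, hgh₀⟩ := (denseRange_superposition hN).exists_dist_lt f hε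
  rw [dist_eq_norm] at hgh₀
  have hDpi : Dense (univ.pi fun _ : Fin N => univ.pi fun _ : ι => D) :=
    dense_pi univ fun _ _ => dense_pi univ fun _ _ => hD
  obtain ⟨h, hh, hhD⟩ := hDpi.inter_open_nonempty {h | ‖f - superposition g h‖ < ε}
    (isOpen_lt (continuous_const.sub (continuous_superposition g)).norm continuous_const)
    ⟨h₀, hgh₀⟩
  exact ⟨g, h, fun p q => hhD p trivial q trivial, hh⟩

end Superposition

section Sigmoid

/-- A smooth sigmoidal function that is strictly increasing on `(-∞, α)` and within `lam` of a
strictly increasing function on `[α, ∞)`. -/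
structure IsAlmostIncreasingSigmoid (α lam : ℝ) (σ : ℝ → ℝ) : Prop where
  contDiff : ContDiff ℝ (⊤ : ℕ∞) σ
  tendsto_atBot : Tendsto σ atBot (𝓝 0)
  tendsto_atTop : Tendsto σ atTop (𝓝 1)
  strictMonoOn : StrictMonoOn σ (Iio α)
  exists_strictMonoOn : ∃ u : ℝ → ℝ, StrictMonoOn u (Ici α) ∧ ∀ x ∈ Ici α, |σ x - u x| ≤ lam

/-- The restrictions to `[0, 1]` of all affine images `a + b * σ (· - θ)` of translates of `σ`: what
a single unit with weight one and a free bias can output. -/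
def affineTranslates (σ : ℝ → ℝ) : Set C(unitInterval, ℝ) :=
  {h | ∃ a b θ : ℝ, ∀ t : unitInterval, h t = a + b * σ (t - θ)}

/-- The centre of the `n`-th of the consecutive windows of length `4` that tile `[α, ∞)`. -/
def windowCenter (α : ℝ) (n : ℕ) : ℝ := α + 4 * n + 2

/-- The function carrying a copy of `b n` in the `n`-th window; it is meant for `b n` supported in
`[-2, 2]`, so that the copies do not interact. -/
noncomputable def windowSum (α : ℝ) (b : ℕ → ℝ → ℝ) (t : ℝ) : ℝ :=
  ∑ᶠ n, b n (t - windowCenter α n)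

section WindowSum

variable {α : ℝ} {b : ℕ → ℝ → ℝ}

theorem windowSum_add_windowCenter (hb : ∀ n t, 2 ≤ |t| → b n t = 0) (n : ℕ) {t : ℝ}
    (ht : |t| ≤ 2) : windowSum α b (t + windowCenter α n) = b n t := by
  rw [windowSum, finsum_eq_single _ n fun k hk => hb _ _ ?_, add_sub_cancel_right]
  obtain ⟨ht₁, ht₂⟩ := abs_le.1 ht
  unfold windowCenter
  rcases lt_or_gt_of_ne hk with h | h
  · have : (k + 1 : ℝ) ≤ n := by exact_mod_cast h
    exact le_abs.2 (.inl (by linarith))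
  · have : (n + 1 : ℝ) ≤ k := by exact_mod_cast h
    exact le_abs.2 (.inr (by linarith))

theorem windowSum_of_le (hb : ∀ n t, 2 ≤ |t| → b n t = 0) {t : ℝ} (ht : t ≤ α) :
    windowSum α b t = 0 := by
  refine finsum_eq_zero_of_forall_eq_zero fun n => hb n _ (le_abs.2 (.inr ?_))
  rw [windowCenter]
  linarith [(n.cast_nonneg : (0 : ℝ) ≤ n)]

theorem windowSum_of_ge (hb : ∀ n t, 2 ≤ |t| → b n t = 0) {t : ℝ} (ht : α ≤ t) :
    windowSum α b t = b ⌊(t - α) / 4⌋₊ (t - windowCenter α ⌊(t - α) / 4⌋₊) := by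
  have hle := Nat.floor_le (show 0 ≤ (t - α) / 4 by linarith)
  have hlt := Nat.lt_floor_add_one ((t - α) / 4)
  have hwindow : |t - windowCenter α ⌊(t - α) / 4⌋₊| ≤ 2 := by
    rw [windowCenter]
    exact abs_le.2 ⟨by linarith, by linarith⟩
  rw [← windowSum_add_windowCenter hb _ hwindow, sub_add_cancel]

theorem abs_windowSum_le (hb : ∀ n t, 2 ≤ |t| → b n t = 0) {β : ℝ} (hβ : ∀ n t, |b n t| ≤ β)
    (t : ℝ) : |windowSum α b t| ≤ β := by
  rcases le_total t α with ht | ht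
  · rw [windowSum_of_le hb ht, abs_zero]
    exact (abs_nonneg _).trans (hβ 0 0)
  · rw [windowSum_of_ge hb ht]
    exact hβ _ _

theorem tendsto_windowSum_atTop (hb : ∀ n t, 2 ≤ |t| → b n t = 0) {β : ℕ → ℝ}
    (hβ : Tendsto β atTop (𝓝 0)) (hbβ : ∀ n t, |b n t| ≤ β n) :
    Tendsto (windowSum α b) atTop (𝓝 0) := by
  have hfloor : Tendsto (fun t : ℝ => ⌊(t - α) / 4⌋₊) atTop atTop :=
    tendsto_nat_floor_atTop.comp
      ((tendsto_atTop_add_const_right _ (-α) tendsto_id).atTop_div_const four_pos)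
  refine squeeze_zero_norm' ?_ (hβ.comp hfloor)
  filter_upwards [eventually_ge_atTop α] with t ht
  rw [windowSum_of_ge hb ht]
  exact hbβ _ _

theorem contDiff_windowSum (hb : ∀ n t, 2 ≤ |t| → b n t = 0)
    (hbs : ∀ n, ContDiff ℝ (⊤ : ℕ∞) (b n)) : ContDiff ℝ (⊤ : ℕ∞) (windowSum α b) := by
  rw [← contMDiff_iff_contDiff]
  refine contMDiff_finsum (fun n => contMDiff_iff_contDiff.2
    ((hbs n).comp (contDiff_id.sub contDiff_const))) fun t => ?_
  obtain ⟨K, hK⟩ := exists_nat_gt (t + 1 - α)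
  refine ⟨Metric.ball t 1, Metric.ball_mem_nhds _ one_pos, (finite_lt_nat K).subset ?_⟩
  rintro n ⟨s, hs, hst⟩
  have hsn : |s - windowCenter α n| < 2 := not_le.1 fun h => hs (hb n _ h)
  rw [Metric.mem_ball, Real.dist_eq] at hst
  have hnK : (n : ℝ) < K := by
    rw [windowCenter] at hsn
    linarith [(abs_lt.1 hst).2, (abs_lt.1 hsn).1, (n.cast_nonneg : (0 : ℝ) ≤ n)]
  exact_mod_cast hnK

end WindowSum

theorem strictMonoOn_expNegInvGlue : StrictMonoOn expNegInvGlue (Ioi 0) := by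
  intro x hx y hy hxy
  rw [mem_Ioi] at hx hy
  simp only [expNegInvGlue, hx.not_ge, hy.not_ge, if_false]
  gcongr

theorem tendsto_expNegInvGlue_atTop : Tendsto expNegInvGlue atTop (𝓝 1) := by
  have hexp : Tendsto (fun x : ℝ => Real.exp (-x⁻¹)) atTop (𝓝 1) := by
    have := (Real.continuous_exp.tendsto _).comp (tendsto_inv_atTop_zero (𝕜 := ℝ)).neg
    simpa [comp_def] using this
  refine hexp.congr' ?_
  filter_upwards [eventually_gt_atTop 0] with x hx
  simp [expNegInvGlue, hx.not_ge]

theorem exists_strictMono_abs_one_sub_le {lam : ℝ} (α : ℝ) (hlam : 0 < lam) :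
    ∃ u : ℝ → ℝ, StrictMonoOn u (Ici α) ∧ ∀ x ∈ Ici α, |1 - u x| ≤ lam := by
  refine ⟨fun t => 1 - lam / (t - α + 1), fun s hs t _ hst => ?_, fun t ht => ?_⟩
  · have hs₀ : 0 < s - α + 1 := by linarith [mem_Ici.1 hs]
    have hdiv := div_lt_div_of_pos_left hlam hs₀ (show s - α + 1 < t - α + 1 by linarith)
    exact sub_lt_sub_left hdiv 1
  · have ht₁ : 1 ≤ t - α + 1 := by linarith [mem_Ici.1 ht]
    rw [sub_sub_cancel, abs_of_nonneg (by positivity)]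
    exact div_le_self hlam.le ht₁

theorem isAlmostIncreasingSigmoid_one_sub_expNegInvGlue_add {α lam : ℝ} (hlam : 0 < lam)
    {ρ : ℝ → ℝ} (hρs : ContDiff ℝ (⊤ : ℕ∞) ρ) (hρ₀ : ∀ t ≤ α, ρ t = 0)
    (hρ : ∀ t, |ρ t| ≤ lam / 2) (hρt : Tendsto ρ atTop (𝓝 0)) :
    IsAlmostIncreasingSigmoid α lam fun t => 1 - expNegInvGlue (α - t) + ρ t where
  contDiff := (contDiff_const.sub
    (expNegInvGlue.contDiff.comp (contDiff_const.sub contDiff_id))).add hρs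
  tendsto_atBot := by
    have hglue := (tendsto_expNegInvGlue_atTop.comp
      (tendsto_atTop_add_const_left _ α tendsto_neg_atBot_atTop)).const_sub 1
    rw [sub_self] at hglue
    refine hglue.congr' ?_
    filter_upwards [eventually_le_atBot α] with t ht
    simp [hρ₀ t ht, sub_eq_add_neg]
  tendsto_atTop := by
    have hlim := hρt.const_add 1
    rw [add_zero] at hlim
    refine hlim.congr' ?_
    filter_upwards [eventually_ge_atTop α] with t ht
    rw [expNegInvGlue.zero_of_nonpos (by linarith), sub_zero]
  strictMonoOn s hs t ht hst := by
    have hglue := strictMonoOn_expNegInvGlue (mem_Ioi.2 (sub_pos.2 ht))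
      (mem_Ioi.2 (sub_pos.2 hs)) (sub_lt_sub_left hst α)
    simp only [hρ₀ s (le_of_lt hs), hρ₀ t (le_of_lt ht)]
    linarith
  exists_strictMonoOn := by
    obtain ⟨u, hu, hu₁⟩ := exists_strictMono_abs_one_sub_le α (half_pos hlam)
    refine ⟨u, hu, fun t ht => ?_⟩
    rw [expNegInvGlue.zero_of_nonpos (by linarith [mem_Ici.1 ht]), sub_zero, add_sub_right_comm]
    linarith [abs_add_le (1 - u t) (ρ t), hu₁ t ht, hρ t]

theorem exists_contDiff_small_cutoff {f : ℝ → ℝ} (hf : ContDiff ℝ (⊤ : ℕ∞) f) {β : ℝ}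
    (hβ : 0 < β) :
    ∃ (w : ℝ → ℝ) (c : ℝ), ContDiff ℝ (⊤ : ℕ∞) w ∧ (∀ t, 2 ≤ |t| → w t = 0) ∧
      (∀ t, |w t| ≤ β) ∧ ∀ t, |t| ≤ 1 → f t = c * w t := by
  let χ : ContDiffBump (0 : ℝ) := ⟨1, 2, one_pos, one_lt_two⟩
  have hχf : ContDiff ℝ (⊤ : ℕ∞) fun t => χ t * f t := χ.contDiff.mul hf
  obtain ⟨K, hK⟩ :=
    hχf.continuous.bounded_above_of_compact_support χ.hasCompactSupport.mul_right
  have hK₀ : 0 ≤ K := (norm_nonneg _).trans (hK 0)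
  refine ⟨fun t => β / (K + 1) * (χ t * f t), (K + 1) / β, contDiff_const.mul hχf,
    fun t ht => ?_, fun t => ?_, fun t ht => ?_⟩
  · beta_reduce
    rw [χ.zero_of_le_dist (by simpa [χ] using ht)]
    ring
  · rw [abs_mul, abs_of_pos (by positivity), div_mul_eq_mul_div, div_le_iff₀ (by positivity)]
    gcongr
    exact (hK t).trans (by linarith)
  · beta_reduce
    rw [χ.one_of_mem_closedBall (by simpa [χ] using ht)]
    field_simp

theorem exists_sigmoid_reproducing (α : ℝ) {lam : ℝ} (hlam : 0 < lam) {f : ℕ → ℝ → ℝ}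
    (hf : ∀ n, ContDiff ℝ (⊤ : ℕ∞) (f n)) :
    ∃ σ, IsAlmostIncreasingSigmoid α lam σ ∧
      ∀ n, ∃ a b θ : ℝ, ∀ t, |t| ≤ 1 → f n t = a + b * σ (t - θ) := by
  choose w c hws hw₀ hw hfw using fun n : ℕ =>
    exists_contDiff_small_cutoff (hf n) (β := lam / 2 / (n + 1)) (by positivity)
  have hw_le : ∀ n t, |w n t| ≤ lam / 2 := fun n t =>
    (hw n t).trans (div_le_self (by positivity) (by linarith [(n.cast_nonneg : (0 : ℝ) ≤ n)]))
  have hlim : Tendsto (fun n : ℕ => lam / 2 / ((n : ℝ) + 1)) atTop (𝓝 0) :=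
    tendsto_const_div_atTop_nhds_zero_nat (lam / 2) |>.comp (tendsto_add_atTop_nat 1) |>.congr
      fun n => by simp
  refine ⟨_, isAlmostIncreasingSigmoid_one_sub_expNegInvGlue_add hlam (contDiff_windowSum hw₀ hws)
    (fun t ht => windowSum_of_le hw₀ ht) (abs_windowSum_le hw₀ hw_le)
    (tendsto_windowSum_atTop hw₀ hlim hw), fun n => ⟨-c n, c n, -windowCenter α n, fun t ht => ?_⟩⟩
  have hcenter : α ≤ t + windowCenter α n := by
    rw [windowCenter]
    linarith [(abs_le.1 ht).1, (n.cast_nonneg : (0 : ℝ) ≤ n)]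
  rw [sub_neg_eq_add, expNegInvGlue.zero_of_nonpos (by linarith),
    windowSum_add_windowCenter hw₀ n (by linarith), hfw n t ht]
  ring

theorem exists_denseRange_polynomial_toContinuousMapOn (a b : ℝ) :
    ∃ P : ℕ → Polynomial ℝ, DenseRange fun n => (P n).toContinuousMapOn (Icc a b) := by
  have hdense : Dense (polynomialFunctions (Icc a b) : Set C(Icc a b, ℝ)) := fun f =>
    continuousMap_mem_polynomialFunctions_closure a b f
  obtain ⟨s, hs, hsc, hsd⟩ := hdense.exists_countable_dense_subset
  obtain ⟨e, rfl⟩ := hsc.exists_eq_range hsd.nonempty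
  choose P hP using fun n => hs (mem_range_self n)
  have hPe : (fun n => (P n).toContinuousMapOn (Icc a b)) = e := funext fun n => (hP n).2
  exact ⟨P, by rwa [DenseRange, hPe]⟩

theorem exists_sigmoid_dense_affineTranslates (α : ℝ) {lam : ℝ} (hlam : 0 < lam) :
    ∃ σ, IsAlmostIncreasingSigmoid α lam σ ∧ Dense (affineTranslates σ) := by
  obtain ⟨P, hP⟩ := exists_denseRange_polynomial_toContinuousMapOn 0 1
  obtain ⟨σ, hσ, hrep⟩ := exists_sigmoid_reproducing α hlam (f := fun n t => (P n).eval t)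
    fun n => (P n).contDiff_aeval _
  refine ⟨σ, hσ, hP.mono ?_⟩
  rintro _ ⟨n, rfl⟩
  obtain ⟨a, b, θ, h⟩ := hrep n
  exact ⟨a, b, θ, fun t => h t (abs_le.2 ⟨by linarith [t.2.1], t.2.2⟩)⟩

end Sigmoid

section Network

theorem exists_affine_translate_approx_Icc {σ : ℝ → ℝ} (hσ : Dense (affineTranslates σ))
    (g : C(ℝ, ℝ)) {R ε : ℝ} (hR : 0 < R) (hε : 0 < ε) :
    ∃ a b c γ : ℝ, ∀ y, |y| ≤ R → |g y - (a + b * σ (c * y - γ))| < ε := by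
  let gR : C(unitInterval, ℝ) := ⟨fun t => g (2 * R * t - R), by fun_prop⟩
  obtain ⟨k, ⟨a, b, θ, hk⟩, hgk⟩ := hσ.exists_dist_lt gR hε
  refine ⟨a, b, 1 / (2 * R), θ - 1 / 2, fun y hy => ?_⟩
  obtain ⟨hy₁, hy₂⟩ := abs_le.1 hy
  have happrox := (ContinuousMap.dist_lt_iff hε).1 hgk ⟨(y + R) / (2 * R),
    div_nonneg (by linarith) (by positivity), (div_le_one (by positivity)).2 (by linarith)⟩
  have hinput : 2 * R * ((y + R) / (2 * R)) - R = y := by field_simp; ring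
  have hshift : (y + R) / (2 * R) - θ = 1 / (2 * R) * y - (θ - 1 / 2) := by field_simp; ring
  rwa [hk, Real.dist_eq, ContinuousMap.coe_mk, hinput, hshift] at happrox

theorem exists_forall_abs_sum_apply_le {ι P X : Type*} [Fintype ι] [Finite P]
    [TopologicalSpace X] [CompactSpace X] (h : P → ι → C(X, ℝ)) :
    ∃ R > 0, ∀ p (x : ι → X), |∑ q, h p q (x q)| ≤ R := by
  cases nonempty_fintype P
  refine ⟨(∑ p, ∑ q, ‖h p q‖) + 1, by positivity, fun p x => ?_⟩
  calc |∑ q, h p q (x q)| ≤ ∑ q, ‖h p q‖ :=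
        (Finset.abs_sum_le_sum_abs _ _).trans
          (Finset.sum_le_sum fun q _ => (h p q).norm_coe_le_norm (x q))
    _ ≤ ∑ p, ∑ q, ‖h p q‖ := Finset.single_le_sum (f := fun p => ∑ q, ‖h p q‖)
        (fun p _ => by positivity) (Finset.mem_univ p)
    _ ≤ (∑ p, ∑ q, ‖h p q‖) + 1 := by linarith

variable {ι : Type*} [Fintype ι] {N : ℕ} {σ : ℝ → ℝ}

theorem exists_network_add_const_approx (hN : 2 * Fintype.card ι < N)
    (hσ : Dense (affineTranslates σ)) (f : C(ι → unitInterval, ℝ)) {ε : ℝ} (hε : 0 < ε) :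
    ∃ (A : ℝ) (b γ : Fin N → ℝ) (c θ : Fin N → ι → ℝ), ∀ x : ι → unitInterval,
      |f x - (A + ∑ p, b p * σ ((∑ q, c p q * σ (x q - θ p q)) - γ p))| < ε := by
  obtain ⟨g, h, hh, hgh⟩ := exists_superposition_of_dense hN hσ f (half_pos hε)
  choose a b θ hab using hh
  obtain ⟨R, hR, hhR⟩ := exists_forall_abs_sum_apply_le h
  have hN₀ : (0 : ℝ) < N := by exact_mod_cast hN.pos
  choose A B C Γ hABC using fun p =>
    exists_affine_translate_approx_Icc hσ (g p) hR (show 0 < ε / 2 / N by positivity)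
  refine ⟨∑ p, A p, B, fun p => Γ p - C p * ∑ q, a p q, fun p q => C p * b p q, θ, fun x => ?_⟩
  have hinner : ∀ p, (∑ q, C p * b p q * σ (x q - θ p q)) - (Γ p - C p * ∑ q, a p q) =
      C p * (∑ q, h p q (x q)) - Γ p := fun p => by
    simp only [hab, Finset.sum_add_distrib, mul_add, Finset.mul_sum, mul_assoc]
    ring
  have hsuper : |f x - ∑ p, g p (∑ q, h p q (x q))| < ε / 2 := by
    rw [← superposition_apply]
    exact ((f - superposition g h).norm_coe_le_norm x).trans_lt hgh
  have houter : |∑ p, g p (∑ q, h p q (x q)) -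
      ∑ p, (A p + B p * σ (C p * (∑ q, h p q (x q)) - Γ p))| ≤ ε / 2 := by
    rw [← Finset.sum_sub_distrib]
    calc _ ≤ ∑ _p : Fin N, ε / 2 / N := (Finset.abs_sum_le_sum_abs _ _).trans
          (Finset.sum_le_sum fun p _ => (hABC p _ (hhR p x)).le)
      _ = ε / 2 := by simp [mul_div_cancel₀, hN₀.ne']
  simp only [hinner, ← Finset.sum_add_distrib]
  exact (abs_sub_le _ _ _).trans_lt (by linarith)

theorem exists_network_approx (hN : 2 * Fintype.card ι < N) (hσ : Dense (affineTranslates σ))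
    (hσ₀ : ∃ T, σ T ≠ 0) {f : (ι → ℝ) → ℝ} (hf : ContinuousOn f (Icc 0 1)) {ε : ℝ} (hε : 0 < ε) :
    ∃ (b γ : Fin (N + 1) → ℝ) (c θ : Fin (N + 1) → ι → ℝ), ∀ x ∈ Icc (0 : ι → ℝ) 1,
      |f x - ∑ p, b p * σ ((∑ q, c p q * σ (x q - θ p q)) - γ p)| < ε := by
  obtain ⟨T, hT⟩ := hσ₀
  let F : C(ι → unitInterval, ℝ) := ⟨fun x => f fun q => x q,
    hf.comp_continuous (by fun_prop) fun x => ⟨fun q => (x q).2.1, fun q => (x q).2.2⟩⟩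
  obtain ⟨A, b, γ, c, θ, hnet⟩ := exists_network_add_const_approx hN hσ F hε
  refine ⟨Fin.cons (A / σ T) b, Fin.cons (-T) γ, Fin.cons 0 c, Fin.cons 0 θ, fun x hx => ?_⟩
  have hx' := hnet fun q => ⟨x q, hx.1 q, hx.2 q⟩
  rw [Fin.sum_univ_succ]
  simpa [F, div_mul_cancel₀ _ hT] using hx'

end Network

theorem stmt18_general (α : ℝ) {lam : ℝ} (hlam : 0 < lam) :
    ∃ σ, IsAlmostIncreasingSigmoid α lam σ ∧
      ∀ (d : ℕ) (f : (Fin d → ℝ) → ℝ), ContinuousOn f (Icc 0 1) → ∀ ε : ℝ, 0 < ε →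
        ∃ (b γ : Fin (2 * d + 2) → ℝ) (c θ : Fin (2 * d + 2) → Fin d → ℝ),
          ∀ x ∈ Icc (0 : Fin d → ℝ) 1,
            |f x - ∑ p, b p * σ ((∑ q, c p q * σ (x q - θ p q)) - γ p)| < ε := by
  obtain ⟨σ, hσ, hdense⟩ := exists_sigmoid_dense_affineTranslates α hlam
  exact ⟨σ, hσ, fun d f hf ε hε => exists_network_approx (by simp) hdense
    (hσ.tendsto_atTop.eventually_ne one_ne_zero).exists hf hε⟩

/-- For any `α, λ > 0` there is an infinitely differentiable sigmoidal
function `σ : ℝ → ℝ`, strictly increasing on `(-∞, α)` and `λ`-strictly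
increasing on `[α, +∞)`, such that two hidden layer neural networks with `d`
units in the first and `2d+2` units in the second hidden layer and activation
`σ` approximate every continuous function on `[0,1]^d` within any `ε > 0`. -/
theorem stmt18 (d : ℕ) (α lam : ℝ) (hα : 0 < α) (hlam : 0 < lam) :
    ∃ σ : ℝ → ℝ,
      ContDiff ℝ (⊤ : ℕ∞) σ ∧
      Filter.Tendsto σ Filter.atBot (nhds 0) ∧
      Filter.Tendsto σ Filter.atTop (nhds 1) ∧
      StrictMonoOn σ (Set.Iio α) ∧
      (∃ u : ℝ → ℝ, StrictMonoOn u (Set.Ici α) ∧ ∀ x ∈ Set.Ici α, |σ x - u x| ≤ lam) ∧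
      (∀ f : (Fin d → ℝ) → ℝ, ContinuousOn f (Set.Icc (0 : Fin d → ℝ) 1) →
        ∀ ε : ℝ, 0 < ε →
          ∃ (dcoef γ : Fin (2 * d + 2) → ℝ) (ccoef θ : Fin (2 * d + 2) → Fin d → ℝ)
            (w : Fin (2 * d + 2) → Fin d → Fin d → ℝ),
            ∀ x ∈ Set.Icc (0 : Fin d → ℝ) 1,
              |f x - ∑ p, dcoef p *
                σ ((∑ q, ccoef p q * σ ((∑ t, w p q t * x t) - θ p q)) - γ p)| < ε) := by
  obtain ⟨σ, ⟨hsmooth, hbot, htop, hmono, hu⟩, happrox⟩ := stmt18_general α hlam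
  exact ⟨σ, hsmooth, hbot, htop, hmono, hu, fun f hf ε hε =>
    let ⟨b, γ, c, θ, h⟩ := happrox d f hf ε hε
    ⟨b, γ, c, θ, fun _ q => Pi.single q 1, by simpa [Pi.single_apply] using h⟩⟩
end
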